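/- Let M ≥ 0, m ≥ M+1, p ∈ V_m ∖ V_M, and let u : Σ_N^+ → ℝ be continuous. Then E(u, χ_p^m) = −H_m u(p), where H_m u(p) is computed from the restriction of u to V_m. -/

import Mathlib

open Filter Topology MeasureTheory Finset Classical

noncomputable section

/-- The one-sided full shift space `Σ_N^+` on `N` symbols; coordinates are indexed
from `0`, so the paper's `x_1 x_2 ⋯` is `x 0, x 1, ⋯` here. It carries the product
of the discrete topology on `Fin N`. -/
abbrev SSp (N : ℕ) : Type := ℕ → Fin N

/-- The level-`m` vertex set `V_m = {p : p_i = p_{i+1} for all i ≥ m+1}` (1-based),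
i.e. the sequences that are constant from (0-based) coordinate `m` on.  It is
realized as a `Finset` via the parametrization by the first `m+1` coordinates;
see `mem_V` for the defining property. -/
noncomputable def V (N m : ℕ) : Finset (SSp N) :=
  (Finset.univ : Finset (Fin (m + 1) → Fin N)).image
    (fun w j => w ⟨min j m, by omega⟩)

lemma const_from (N m : ℕ) (p : SSp N) (h : ∀ i, m ≤ i → p i = p (i + 1)) :
    ∀ j, m ≤ j → p j = p m := by
  intro j hj
  induction j with
  | zero => have : m = 0 := by omega
            simp [this]
  | succ k ih =>
      rcases Nat.lt_or_ge k m with hk | hk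
      · have : m = k + 1 := by omega
        simp [this]
      · rw [← h k hk]
        exact ih hk

/-- Membership in `V N m` is exactly the paper's condition
`p_i = p_{i+1}` for all `i ≥ m+1` (1-based), i.e. `p i = p (i+1)` for all `i ≥ m`. -/
lemma mem_V {N m : ℕ} {p : SSp N} :
    p ∈ V N m ↔ ∀ i, m ≤ i → p i = p (i + 1) := by
  classical
  constructor
  · intro hp i hi
    simp only [V, Finset.mem_image] at hp
    obtain ⟨w, -, rfl⟩ := hp
    have h1 : min i m = m := by omega
    have h2 : min (i + 1) m = m := by omega
    simp [h1, h2]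
  · intro h
    simp only [V, Finset.mem_image]
    refine ⟨fun j => p j, Finset.mem_univ _, ?_⟩
    funext j
    rcases Nat.lt_or_ge j m with hj | hj
    · have : min j m = j := by omega
      simp [this]
    · have : min j m = m := by omega
      simp only [this]
      exact (const_from N m p h j hj).symm

/-- The deleted neighbourhood `U_{p,m} = {q ∈ V_m : q ≠ p, q_i = p_i for 1 ≤ i ≤ m}`
(1-based), i.e. `q` agrees with `p` on the first `m` (0-based: `i < m`) coordinates. -/
noncomputable def U (N m : ℕ) (p : SSp N) : Finset (SSp N) :=
  (V N m).filter (fun q => q ≠ p ∧ ∀ i, i < m → q i = p i)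

/-- `κ_p = min {j : p ∈ V_j}`. -/
noncomputable def kappa (N : ℕ) (p : SSp N) : ℕ := sInf {j | p ∈ V N j}

/-- The difference operator
`H_m u (p) = Σ_{i = κ_p}^{m} Σ_{q ∈ U_{p,i}} (u(q) − u(p))`. -/
noncomputable def H (N m : ℕ) (u : SSp N → ℝ) (p : SSp N) : ℝ :=
  ∑ i ∈ Finset.Icc (kappa N p) m, ∑ q ∈ U N i p, (u q - u p)

/-- The Dirichlet form `E_{H_m}(u, v) = − Σ_{p ∈ V_m} u(p) · H_m v(p)`. -/
noncomputable def EH (N m : ℕ) (u v : SSp N → ℝ) : ℝ :=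
  -∑ p ∈ V N m, u p * H N m v p

/-- The cylinder set `[p_1 ⋯ p_m]`, determined by the first `m` coordinates of `p`. -/
def cyl (N m : ℕ) (p : SSp N) : Set (SSp N) := {x | ∀ i, i < m → x i = p i}

/-- `χ_p^m` : the indicator function of the cylinder set `[p_1 ⋯ p_{m+1}]`. -/
noncomputable def chi (N m : ℕ) (p : SSp N) : SSp N → ℝ :=
  (cyl N (m + 1) p).indicator 1

/-- `u ∈ dom E`: `u` is continuous and the energy
`E(u) = lim_m E_{H_m}(u|_{V_m})` exists (and is finite). -/
def MemDomE (N : ℕ) (u : SSp N → ℝ) : Prop :=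
  Continuous u ∧ ∃ L : ℝ, Tendsto (fun m => EH N m u u) atTop (nhds L)

/-- `v ∈ dom_M E`: `v` has finite energy and vanishes on the boundary `V_M`. -/
def MemDomME (N M : ℕ) (v : SSp N → ℝ) : Prop :=
  MemDomE N v ∧ ∀ p ∈ V N M, v p = 0

/-- `u ∈ 𝒟_M` with `Δ u = f` (strong formulation with boundary `V_M`):
`u` and `f` are continuous and
`lim_{m → ∞} max_{p ∈ V_m ∖ V_M} |N^{m+1} H_m u(p) − f(p)| = 0`. -/
def IsLaplacianOn (N M : ℕ) (u f : SSp N → ℝ) : Prop :=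
  Continuous u ∧ Continuous f ∧
    ∀ ε : ℝ, 0 < ε → ∃ m₀ : ℕ, ∀ m, m₀ ≤ m → ∀ p ∈ V N m, p ∉ V N M →
      |(N : ℝ) ^ (m + 1) * H N m u p - f p| < ε

/-- `u ∈ D_μ` with `Δ u = f` (original definition of the Laplacian):
`u` and `f` are continuous and
`lim_{m → ∞} max_{p ∈ V_m ∖ V_{m−1}} |N^{m+1} H_m u(p) − f(p)| = 0`
(the level is written `m+1` to avoid natural subtraction). -/
def IsLaplacianDmu (N : ℕ) (u f : SSp N → ℝ) : Prop :=
  Continuous u ∧ Continuous f ∧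
    ∀ ε : ℝ, 0 < ε → ∃ m₀ : ℕ, ∀ m, m₀ ≤ m → ∀ p ∈ V N (m + 1), p ∉ V N m →
      |(N : ℝ) ^ (m + 2) * H N (m + 1) u p - f p| < ε

/-- `μ` is the equidistributed Bernoulli measure:
`μ([p_1 ⋯ p_m]) = N^{−m}` for every cylinder set. -/
def IsBernoulli (N : ℕ) (μ : Measure (SSp N)) : Prop :=
  ∀ (m : ℕ) (p : SSp N), μ (cyl N m p) = (N : ENNReal)⁻¹ ^ m

/-- `ρ(x,y) = min {i : x_i ≠ y_i}` (1-based; `0`-based first disagreement plus one). -/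
noncomputable def rho (N : ℕ) (x y : SSp N) : ℕ := sInf {i | x i ≠ y i} + 1

/-- The matrix `(G_m)_{pq}`: `2/N` if `q = p`, `1/N` if `q ∈ U_{p,m}`, `0` otherwise. -/
noncomputable def Gmat (N m : ℕ) (p q : SSp N) : ℝ :=
  if q = p then 2 / N else if q ∈ U N m p then 1 / N else 0

/-- The Green's function
`g(x,y) = Σ_{m=1}^{ρ(x,y)−1} Σ_{r,s ∈ V_m ∖ V_{m−1}} (G_m)_{rs} χ_r^m(x) χ_s^m(y)`
for `ρ(x,y) > 1`, and `g(x,y) = 0` for `ρ(x,y) = 1` (the sum is then empty). -/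
noncomputable def greenFn (N : ℕ) (x y : SSp N) : ℝ :=
  ∑ m ∈ Finset.Icc 1 (rho N x y - 1),
    ∑ r ∈ (V N m).filter (fun r => r ∉ V N (m - 1)),
      ∑ s ∈ (V N m).filter (fun s => s ∉ V N (m - 1)),
        Gmat N m r s * chi N m r x * chi N m s y

/-- The Green's operator `G_μ f (x) = ∫_{Σ_N^+ ∖ {x}} g(x,y) f(y) dμ(y)`. -/
noncomputable def Gop (N : ℕ) (μ : Measure (SSp N)) (f : SSp N → ℝ) (x : SSp N) : ℝ :=
  ∫ y in ({x}ᶜ : Set (SSp N)), greenFn N x y * f y ∂μ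

/-!
At level `i` the points of `V_i` that agree in their first `i` coordinates are joined pairwise, and
a discrete Green's identity turns `E_{H_n}(u, v)` into the sum over `i ≤ n` of the energies
`1 / 2 * ∑ (u y - u x) * (v y - v x)` of these edges. Since `χ_p^m` depends only on the first
`m + 1` coordinates, it is constant along the edges of every level `i > m`; hence
`E_{H_n}(u, χ_p^m) = E_{H_m}(u, χ_p^m)` for `n ≥ m`. On `V_m` the function `χ_p^m` is the point
mass at `p`, so by symmetry this energy is `E_{H_m}(χ_p^m, u) = -H_m u(p)`.
-/

section Levels

variable {N m n i : ℕ} {p x y : SSp N} {u v : SSp N → ℝ}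

lemma V_mono (N : ℕ) : Monotone (V N) := fun _ _ hij _ hx =>
  mem_V.mpr fun k hk => mem_V.mp hx k (hij.trans hk)

lemma mem_U : y ∈ U N i x ↔ y ∈ V N i ∧ y ≠ x ∧ ∀ k, k < i → y k = x k := by
  rw [U, Finset.mem_filter]

lemma mem_V_and_mem_U_comm :
    x ∈ V N i ∧ y ∈ U N i x ↔ y ∈ V N i ∧ x ∈ U N i y := by
  simp only [mem_U, ne_comm (a := x), eq_comm (a := x _)]
  tauto

lemma kappa_le_iff (hx : x ∈ V N n) : kappa N x ≤ i ↔ x ∈ V N i := by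
  have hmem : x ∈ V N (kappa N x) := Nat.sInf_mem (s := {j | x ∈ V N j}) ⟨n, hx⟩
  exact ⟨fun h => V_mono N h hmem, fun h => Nat.sInf_le h⟩

lemma eq_of_mem_V_of_forall_le (hx : x ∈ V N m) (hy : y ∈ V N m) (h : ∀ k ≤ m, x k = y k) :
    x = y := by
  funext k
  rcases le_total k m with hk | hk
  · exact h k hk
  · rw [const_from N m x (mem_V.mp hx) k hk, const_from N m y (mem_V.mp hy) k hk, h m le_rfl]

/-- The energy of the edges `{x, y}`, `y ∈ U_{x,i}`, that level `i` adds to the graph on `V_i`.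
The factor `1 / 2` compensates for each edge being counted from both of its endpoints. -/
def levelEnergy (N i : ℕ) (u v : SSp N → ℝ) : ℝ :=
  1 / 2 * ∑ x ∈ V N i, ∑ y ∈ U N i x, (u y - u x) * (v y - v x)

lemma levelEnergy_comm (N i : ℕ) (u v : SSp N → ℝ) :
    levelEnergy N i u v = levelEnergy N i v u := by
  simp only [levelEnergy, mul_comm]

lemma levelEnergy_eq_zero_of_dependsOn (u : SSp N → ℝ) (hv : DependsOn v (Set.Iio i)) :
    levelEnergy N i u v = 0 := by
  have hzero : ∑ x ∈ V N i, ∑ y ∈ U N i x, (u y - u x) * (v y - v x) = 0 :=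
    Finset.sum_eq_zero fun x _ => Finset.sum_eq_zero fun y hy => by
      rw [hv (mem_U.mp hy).2.2, sub_self, mul_zero]
  rw [levelEnergy, hzero, mul_zero]

lemma sum_V_sum_U_comm (N i : ℕ) (f : SSp N → SSp N → ℝ) :
    ∑ x ∈ V N i, ∑ y ∈ U N i x, f x y = ∑ x ∈ V N i, ∑ y ∈ U N i x, f y x :=
  Finset.sum_comm' fun _ _ => mem_V_and_mem_U_comm.trans and_comm

lemma sum_mul_sum_sub_eq_neg_levelEnergy (N i : ℕ) (u v : SSp N → ℝ) :
    ∑ x ∈ V N i, u x * ∑ y ∈ U N i x, (v y - v x) = -levelEnergy N i u v := by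
  have hswap := sum_V_sum_U_comm N i fun x y => u x * (v y - v x)
  have hexpand : ∑ x ∈ V N i, ∑ y ∈ U N i x, (u y - u x) * (v y - v x) =
      -(∑ x ∈ V N i, ∑ y ∈ U N i x, u y * (v x - v y)) -
        ∑ x ∈ V N i, ∑ y ∈ U N i x, u x * (v y - v x) := by
    simp only [← Finset.sum_neg_distrib, ← Finset.sum_sub_distrib]
    exact Finset.sum_congr rfl fun x _ => Finset.sum_congr rfl fun y _ => by ring
  simp only [levelEnergy, hexpand, Finset.mul_sum] at hswap ⊢
  linarith

lemma EH_eq_sum_levelEnergy (N n : ℕ) (u v : SSp N → ℝ) :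
    EH N n u v = ∑ i ∈ range (n + 1), levelEnergy N i u v := by
  have hlevels : ∀ x i, x ∈ V N n ∧ i ∈ Icc (kappa N x) n ↔ x ∈ V N i ∧ i ∈ range (n + 1) := by
    intro x i
    rw [Finset.mem_Icc, Finset.mem_range_succ_iff]
    exact ⟨fun ⟨hx, hκ, hi⟩ => ⟨(kappa_le_iff hx).mp hκ, hi⟩,
      fun ⟨hx, hi⟩ => ⟨V_mono N hi hx, (kappa_le_iff hx).mpr hx, hi⟩⟩
  calc EH N n u v
      = -∑ x ∈ V N n, ∑ i ∈ Icc (kappa N x) n, u x * ∑ y ∈ U N i x, (v y - v x) := by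
        simp only [EH, H, Finset.mul_sum]
    _ = -∑ i ∈ range (n + 1), ∑ x ∈ V N i, u x * ∑ y ∈ U N i x, (v y - v x) := by
        rw [Finset.sum_comm' hlevels]
    _ = ∑ i ∈ range (n + 1), levelEnergy N i u v := by
        simp only [sum_mul_sum_sub_eq_neg_levelEnergy, Finset.sum_neg_distrib, neg_neg]

lemma EH_comm (N n : ℕ) (u v : SSp N → ℝ) : EH N n u v = EH N n v u := by
  simp only [EH_eq_sum_levelEnergy, levelEnergy_comm N _ u v]

lemma EH_eq_of_dependsOn (hmn : m ≤ n) (u : SSp N → ℝ) (hv : DependsOn v (Set.Iic m)) :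
    EH N n u v = EH N m u v := by
  rw [EH_eq_sum_levelEnergy, EH_eq_sum_levelEnergy]
  have hvanish : ∀ i ≥ m + 1, levelEnergy N i u v = 0 := fun i hi =>
    levelEnergy_eq_zero_of_dependsOn u (hv.mono (Set.Iic_subset_Iio.mpr hi))
  exact Finset.eventually_constant_sum hvanish (Nat.succ_le_succ hmn)

lemma dependsOn_chi (m : ℕ) (p : SSp N) : DependsOn (chi N m p) (Set.Iic m) := by
  intro x y h
  have hcyl : x ∈ cyl N (m + 1) p ↔ y ∈ cyl N (m + 1) p :=
    forall₂_congr fun k hk => by rw [h k (Nat.le_of_lt_succ hk)]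
  simp only [chi, Set.indicator_apply, hcyl, Pi.one_apply]

lemma chi_apply_of_mem_V (hp : p ∈ V N m) (hx : x ∈ V N m) :
    chi N m p x = if x = p then 1 else 0 := by
  have hcyl : x ∈ cyl N (m + 1) p ↔ x = p :=
    ⟨fun h => eq_of_mem_V_of_forall_le hx hp fun k hk => h k (Nat.lt_succ_of_le hk),
      fun h _ _ => congrFun h _⟩
  simp only [chi, Set.indicator_apply, hcyl, Pi.one_apply]

lemma EH_chi_left (hp : p ∈ V N m) (u : SSp N → ℝ) : EH N m (chi N m p) u = -H N m u p := by
  have hpoint : ∀ x ∈ V N m, chi N m p x * H N m u x = if x = p then H N m u x else 0 :=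
    fun x hx => by rw [chi_apply_of_mem_V hp hx, ite_mul, one_mul, zero_mul]
  rw [EH, Finset.sum_congr rfl hpoint, Finset.sum_ite_eq', if_pos hp]

end Levels

theorem statement6_general {N m n : ℕ} (hmn : m ≤ n) {p : SSp N} (hp : p ∈ V N m)
    (u : SSp N → ℝ) : EH N n u (chi N m p) = -H N m u p :=
  calc EH N n u (chi N m p)
      = EH N m u (chi N m p) := EH_eq_of_dependsOn hmn u (dependsOn_chi m p)
    _ = EH N m (chi N m p) u := EH_comm N m u _
    _ = -H N m u p := EH_chi_left hp u

/-- For `M ≥ 0`, `m ≥ M+1`, `p ∈ V_m ∖ V_M` and continuous `u`,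
`E(u, χ_p^m) = −H_m u(p)`. -/
theorem statement6 (N : ℕ) (hN : 2 ≤ N) (M m : ℕ) (hm : M + 1 ≤ m)
    (p : SSp N) (hp : p ∈ V N m) (hpM : p ∉ V N M)
    (u : SSp N → ℝ) (hu : Continuous u) :
    Tendsto (fun n => EH N n u (chi N m p)) atTop (nhds (-(H N m u p))) := by
  exact tendsto_atTop_of_eventually_const fun n (hn : m ≤ n) => statement6_general hn hp u
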